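/- (Abstract Maximum Principle) Let Ω ⊆ ℝⁿ be open, let 𝒰 be a set, let y : 𝒰 → Ω be a map, let 𝒮 ⊆ Ω, and let Ψ : Ω → ℝ be differentiable. Let 𝒰̂ ⊆ 𝒰 and let (u⋆, y⋆) with y⋆ = y[u⋆] ∈ 𝒮 be a 𝒰̂-minimizer, i.e. Ψ(y[u]) ≥ Ψ(y⋆) for every u ∈ 𝒰̂ with y[u] ∈ 𝒮. Let 𝒰⋆ ⊆ 𝒰̂ be a subfamily with u⋆ ∈ 𝒰⋆, and let S and R be Boltyanski approximating cones at y⋆ to the target 𝒮 and to the 𝒰⋆-reachable set y[𝒰⋆] := {y[u] : u ∈ 𝒰⋆}, respectively. Then there exists a linear form (λ, λ_c) ∈ (ℝ^{n+1})* with λ_c ≤ 0 such that: (Nontriviality) (λ, λ_c) ≠ 0; (Maximization) max{(λ + λ_c ∇Ψ(y⋆))·v : v ∈ R} = 0; (Non-transversality) λ ∈ −S⊥. -/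

import Mathlib

open Set Metric Filter Asymptotics Topology

/-- A convex cone in a real vector space: contains `0`, is convex, and is
invariant under multiplication by nonnegative scalars. -/
def IsConvexCone {E : Type*} [AddCommMonoid E] [Module ℝ E] (C : Set E) : Prop :=
  (0 : E) ∈ C ∧ Convex ℝ C ∧ ∀ r : ℝ, 0 ≤ r → ∀ c ∈ C, r • c ∈ C

/-- `K` is a Boltyanski approximating cone to `A` at `y`: there are `m : ℕ`, a convex cone
`C ⊆ ℝᵐ`, a linear map `L : ℝᵐ → E` with `K = L(C)`, a `δ > 0` and a continuous map
`F : C ∩ B_m(δ) → A` with `F 0 = y` and `F c = y + L c + o(c)`. -/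
def IsBoltyanskiCone {E : Type*} [NormedAddCommGroup E] [NormedSpace ℝ E]
    (A : Set E) (y : E) (K : Set E) : Prop :=
  ∃ (m : ℕ) (C : Set (EuclideanSpace ℝ (Fin m)))
    (L : EuclideanSpace ℝ (Fin m) →ₗ[ℝ] E) (δ : ℝ)
    (F : EuclideanSpace ℝ (Fin m) → E),
    IsConvexCone C ∧ K = ⇑L '' C ∧ 0 < δ ∧
    ContinuousOn F (C ∩ closedBall 0 δ) ∧
    (∀ c ∈ C ∩ closedBall 0 δ, F c ∈ A) ∧ F 0 = y ∧
    (fun c => F c - y - L c) =o[𝓝[C ∩ closedBall 0 δ] 0] (fun c => c)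

/-!
Suppose that `(v, w, s) ↦ (v - w, Ψ' v + s)` maps `R × S × [0, ∞)` onto the whole space. Composed
with the linear parametrizations of `R` and `S`, it then has a continuous right inverse with values
in a convex cone, and Brouwer's theorem makes the nonlinear map `(a, b, s) ↦ (a - b, Ψ a + s)`, on
the parametrized sets, cover a neighbourhood of its value `(0, Ψ y)` at the base point. It therefore
takes some value `(0, c)` with `c < Ψ y`, which contradicts minimality. So the image is a proper
convex cone, and a nonzero linear form that is nonpositive on it is the desired multiplier.

Brouwer's theorem comes from the argument of Milnor and Rogers that a `C¹` map `r` of constant norm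
`ρ > 0` cannot fix the sphere of radius `ρ`. With `h = r - id`, the integral of `det (1 + t h')`
over the ball is a polynomial in `t`. For small `t` it equals the volume of the ball, which
`id + t h` maps bijectively onto itself, so it equals that volume at `t = 1` too, where the
integrand `det r'` vanishes.
-/

section Brouwer

open MeasureTheory Module Polynomial
open scoped NNReal

theorem exists_polynomial_eval_eq_det_one_add_smul {E : Type*} [AddCommGroup E] [Module ℝ E]
    [FiniteDimensional ℝ E] (A : E →ₗ[ℝ] E) :
    ∃ p : ℝ[X], p.natDegree ≤ finrank ℝ E ∧ ∀ t : ℝ, p.eval t = (1 + t • A).det := by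
  set M := LinearMap.toMatrix (finBasis ℝ E) (finBasis ℝ E) A with hM
  refine ⟨((X : ℝ[X]) • M.map C + (1 : Matrix _ _ ℝ).map C).det, ?_, fun t ↦ ?_⟩
  · exact (natDegree_det_X_add_C_le M 1).trans_eq (Fintype.card_fin _)
  · have toMatrix_add : LinearMap.toMatrix (finBasis ℝ E) (finBasis ℝ E) (1 + t • A) =
        t • M + 1 := by
      rw [map_add, map_smul, LinearMap.toMatrix_one, add_comm, hM]
    rw [← LinearMap.det_toMatrix (finBasis ℝ E), toMatrix_add, ← coe_evalRingHom,
      RingHom.map_det]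
    congr 1
    ext i j
    rcases eq_or_ne i j with rfl | hij
    · simp [-X_mul_C]
    · simp [hij, -X_mul_C]

theorem exists_polynomial_eval_eq_integral {α : Type*} [MeasurableSpace α] {μ : Measure α}
    {N : ℕ} {f : ℝ → α → ℝ} (hf : ∀ t, Integrable (f t) μ)
    (hpoly : ∀ x, ∃ p : ℝ[X], p.natDegree ≤ N ∧ ∀ t, p.eval t = f t x) :
    ∃ P : ℝ[X], ∀ t, P.eval t = ∫ x, f t x ∂μ := by
  let nodes := Finset.range (N + 1)
  have interpolation (t : ℝ) (x : α) :
      f t x = ∑ i ∈ nodes, f i x * (Lagrange.basis nodes Nat.cast i).eval t := by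
    obtain ⟨p, hpN, hp⟩ := hpoly x
    have degree_lt : p.degree < nodes.card := by
      rw [Finset.card_range]
      exact natDegree_le_iff_degree_le.1 hpN |>.trans_lt (by exact_mod_cast N.lt_succ_self)
    rw [← hp, Lagrange.eq_interpolate Nat.cast_injective.injOn degree_lt,
      Lagrange.interpolate_apply, eval_finsetSum]
    simp [hp]
  refine ⟨∑ i ∈ nodes, C (∫ x, f i x ∂μ) * Lagrange.basis nodes Nat.cast i, fun t ↦ ?_⟩
  simp_rw [interpolation t]
  rw [integral_finsetSum _ fun (i : ℕ) _ ↦ (hf i).mul_const _, eval_finsetSum]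
  simp_rw [eval_C_mul, integral_mul_const]

theorem bijective_add_of_lipschitzWith {E : Type*} [NormedAddCommGroup E] [NormedSpace ℝ E]
    [CompleteSpace E] {h : E → E} {K : ℝ≥0} (hh : LipschitzWith K h) (hK : K < 1) :
    Function.Bijective fun x ↦ x + h x := by
  have approx : ApproximatesLinearOn (fun x ↦ x + h x)
      (ContinuousLinearEquiv.refl ℝ E : E →L[ℝ] E) univ K := by
    rw [ApproximatesLinearOn.approximatesLinearOn_iff_lipschitzOnWith, lipschitzOnWith_univ]
    convert! hh using 1
    ext x
    simp
  have small : Subsingleton E ∨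
      K < ‖((ContinuousLinearEquiv.refl ℝ E).symm : E →L[ℝ] E)‖₊⁻¹ := by
    rcases subsingleton_or_nontrivial E with hE | hE
    · exact .inl hE
    · have norm_refl : ‖((ContinuousLinearEquiv.refl ℝ E).symm : E →L[ℝ] E)‖₊ = 1 :=
        ContinuousLinearMap.nnnorm_id
      exact .inr (by rwa [norm_refl, inv_one])
  exact ⟨injOn_univ.1 (approx.injOn small), approx.surjective small⟩

theorem image_id_add_eq_self {E : Type*} [AddMonoid E] {h : E → E} {s : Set E}
    (hbij : Function.Bijective fun x ↦ x + h x) (hs : ∀ x ∉ s, h x = 0) :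
    (fun x ↦ x + h x) '' s = s := by
  have image_compl : (fun x ↦ x + h x) '' sᶜ = sᶜ := by
    refine (image_congr fun x hx ↦ ?_).trans (image_id sᶜ)
    rw [hs x hx, add_zero, id]
  rw [← compl_inj_iff, ← image_compl_eq hbij, image_compl]

theorem exists_mem_frontier_of_isPreconnected {X : Type*} [TopologicalSpace X] {s t : Set X}
    (ht : IsPreconnected t) (hs : (t ∩ s).Nonempty) (hsc : (t ∩ sᶜ).Nonempty) :
    (t ∩ frontier s).Nonempty := by
  by_contra! hfr
  have cover : t ⊆ interior s ∪ interior sᶜ := by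
    rw [← compl_frontier_eq_union_interior]
    exact subset_compl_iff_disjoint_right.2 (disjoint_iff_inter_eq_empty.2 hfr)
  have interiors_disjoint : Disjoint (interior s) (interior sᶜ) :=
    disjoint_compl_right.mono interior_subset interior_subset
  rcases ht.subset_or_subset isOpen_interior isOpen_interior interiors_disjoint cover with h | h
  · obtain ⟨x, hxt, hxs⟩ := hsc
    exact hxs (interior_subset (h hxt))
  · obtain ⟨x, hxt, hxs⟩ := hs
    exact interior_subset (h hxt) hxs

theorem lipschitzWith_indicator {E F : Type*} [NormedAddCommGroup E] [NormedSpace ℝ E]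
    [SeminormedAddCommGroup F] {s : Set E} {f : E → F} {K : ℝ≥0}
    (hs : IsClosed s) (hf : LipschitzOnWith K f s) (hzero : ∀ x ∈ frontier s, f x = 0) :
    LipschitzWith K (s.indicator f) := by
  have crossing {x y : E} (hx : x ∈ s) (hy : y ∉ s) : dist (f x) 0 ≤ K * dist x y := by
    obtain ⟨z, hz, hzs⟩ := exists_mem_frontier_of_isPreconnected
      (convex_segment (𝕜 := ℝ) x y).isPreconnected
      ⟨x, left_mem_segment ℝ x y, hx⟩ ⟨y, right_mem_segment ℝ x y, hy⟩
    calc dist (f x) 0 = dist (f x) (f z) := by rw [hzero z hzs]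
      _ ≤ K * dist x z := hf.dist_le_mul x hx z (hs.frontier_subset hzs)
      _ ≤ K * dist x y := by
        gcongr
        rw [← dist_add_dist_of_mem_segment hz]
        exact le_add_of_nonneg_right dist_nonneg
  refine LipschitzWith.of_dist_le_mul fun x y ↦ ?_
  by_cases hx : x ∈ s <;> by_cases hy : y ∈ s
  · simpa only [indicator_of_mem hx, indicator_of_mem hy] using hf.dist_le_mul x hx y hy
  · simpa only [indicator_of_mem hx, indicator_of_notMem hy] using crossing hx hy
  · simpa only [indicator_of_notMem hx, indicator_of_mem hy, dist_comm] using crossing hy hx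
  · rw [indicator_of_notMem hx, indicator_of_notMem hy, dist_self]
    positivity

section ChangeOfVariables

variable {E : Type*} [NormedAddCommGroup E] [NormedSpace ℝ E] [FiniteDimensional ℝ E]
  [MeasurableSpace E] [BorelSpace E] {μ : Measure E} [μ.IsAddHaarMeasure]
  {s : Set E} {h : E → E} {h' : E → E →L[ℝ] E} {K : ℝ≥0}

theorem eventually_setIntegral_det_one_add_smul (hs : IsCompact s) (hh : LipschitzWith K h)
    (hzero : ∀ x ∉ s, h x = 0) (hderiv : ∀ x ∈ s, HasFDerivWithinAt h (h' x) s x)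
    (hcont : ContinuousOn h' s) :
    ∀ᶠ t : ℝ in 𝓝 0, ∫ x in s, (1 + t • h' x).det ∂μ = μ.real s := by
  have det_pos : ∀ᶠ t : ℝ in 𝓝 0, ∀ A ∈ h' '' s, 0 < (1 + t • A).det := by
    refine (hs.image_of_continuousOn hcont).eventually_forall_of_forall_eventually fun A _ ↦ ?_
    have det_continuous : Continuous fun q : ℝ × (E →L[ℝ] E) ↦ (1 + q.1 • q.2).det :=
      ContinuousLinearMap.continuous_det.comp (by fun_prop)
    exact det_continuous.continuousAt.eventually (lt_mem_nhds (by simp [ContinuousLinearMap.det]))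
  have contracting : ∀ᶠ t : ℝ in 𝓝 0, ‖t‖₊ * K < 1 := by
    have : Continuous fun t : ℝ ↦ ‖t‖₊ * K := by fun_prop
    exact this.continuousAt.eventually (gt_mem_nhds (by simp))
  filter_upwards [det_pos, contracting] with t ht_pos ht_contr
  have bij : Function.Bijective fun x ↦ x + t • h x :=
    bijective_add_of_lipschitzWith ((lipschitzWith_smul t).comp hh) ht_contr
  calc ∫ x in s, (1 + t • h' x).det ∂μ
      = ∫ x in s, |(1 + t • h' x).det| • (1 : ℝ) ∂μ := by
        refine setIntegral_congr_fun hs.measurableSet fun x hx ↦ ?_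
        simp [abs_of_pos (ht_pos _ (mem_image_of_mem h' hx))]
    _ = ∫ _ in (fun x ↦ x + t • h x) '' s, (1 : ℝ) ∂μ :=
        (integral_image_eq_integral_abs_det_fderiv_smul μ hs.measurableSet
          (fun x hx ↦ (hasFDerivWithinAt_id x s).fun_add ((hderiv x hx).fun_const_smul t))
          bij.injective.injOn fun _ ↦ 1).symm
    _ = μ.real s := by
        rw [image_id_add_eq_self bij fun x hx ↦ by rw [hzero x hx, smul_zero]]
        simp

theorem setIntegral_det_one_add (hs : IsCompact s) (hh : LipschitzWith K h)
    (hzero : ∀ x ∉ s, h x = 0) (hderiv : ∀ x ∈ s, HasFDerivWithinAt h (h' x) s x)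
    (hcont : ContinuousOn h' s) :
    ∫ x in s, (1 + h' x).det ∂μ = μ.real s := by
  have integrable (t : ℝ) : Integrable (fun x ↦ (1 + t • h' x).det) (μ.restrict s) :=
    (ContinuousLinearMap.continuous_det.comp_continuousOn (by fun_prop)).integrableOn_compact hs
  obtain ⟨P, hP⟩ := exists_polynomial_eval_eq_integral integrable fun x ↦
    exists_polynomial_eval_eq_det_one_add_smul (h' x : E →ₗ[ℝ] E)
  have P_eq_const : P = C (μ.real s) := by
    refine eq_of_infinite_eval_eq _ _ (infinite_of_mem_nhds (0 : ℝ) ?_)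
    filter_upwards [eventually_setIntegral_det_one_add_smul (μ := μ) hs hh hzero hderiv hcont]
      with t ht
    rw [hP, ht, eval_C]
  calc ∫ x in s, (1 + h' x).det ∂μ = P.eval 1 := by simp_rw [hP, one_smul]
    _ = μ.real s := by rw [P_eq_const, eval_C]

end ChangeOfVariables

section FixedPoint

theorem det_eq_zero_of_norm_eq_const {E : Type*} [NormedAddCommGroup E] [InnerProductSpace ℝ E]
    [FiniteDimensional ℝ E] {r : E → E} {r' : E →L[ℝ] E} {x : E} {R : ℝ} (hR : R ≠ 0)
    (hr : HasFDerivAt r r' x) (hnorm : ∀ᶠ z in 𝓝 x, ‖r z‖ = R) : r'.det = 0 := by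
  by_contra hdet
  have orthogonal (v : E) : inner ℝ (r x) (r' v) = 0 := by
    have norm_sq_const : (fun z ↦ ‖r z‖ ^ 2) =ᶠ[𝓝 x] fun _ ↦ R ^ 2 :=
      hnorm.mono fun z hz ↦ by simp only [hz]
    have := hr.norm_sq.unique ((hasFDerivAt_const (R ^ 2) x).congr_of_eventuallyEq norm_sq_const)
    simpa using DFunLike.congr_fun this v
  obtain ⟨v, hv⟩ := (LinearMap.equivOfDetNeZero (r' : E →ₗ[ℝ] E) hdet).surjective (r x)
  have r_eq_zero : r x = 0 := inner_self_eq_zero (𝕜 := ℝ) |>.1 (by rw [← orthogonal v, ← hv]; rfl)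
  exact hR (by rw [← hnorm.self_of_nhds, r_eq_zero, norm_zero])

theorem exists_mem_sphere_ne_of_norm_eq_const {E : Type*} [NormedAddCommGroup E]
    [InnerProductSpace ℝ E] [FiniteDimensional ℝ E] {r : E → E} {R : ℝ} (hR : 0 < R)
    (hr : ContDiff ℝ 1 r) (hnorm : ∀ x, ‖r x‖ = R) :
    ∃ x ∈ sphere (0 : E) R, r x ≠ x := by
  by_contra! hfix
  borelize E
  let ball := closedBall (0 : E) R
  have ball_compact : IsCompact ball := isCompact_closedBall 0 R
  let h : E → E := ball.indicator fun x ↦ r x - x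
  have diff_contDiff : ContDiff ℝ 1 fun x ↦ r x - x := hr.sub contDiff_id
  obtain ⟨K, hK⟩ := diff_contDiff.locallyLipschitz.locallyLipschitzOn
    |>.exists_lipschitzOnWith_of_compact ball_compact
  have h_lipschitz : LipschitzWith K h :=
    lipschitzWith_indicator isClosed_closedBall hK fun x hx ↦ by
      rw [frontier_closedBall _ hR.ne'] at hx
      rw [hfix x hx, sub_self]
  have h_deriv (x) (hx : x ∈ ball) : HasFDerivWithinAt h (fderiv ℝ r x - 1) ball x :=
    ((hr.differentiable one_ne_zero x).hasFDerivAt.fun_sub (hasFDerivAt_id x)).hasFDerivWithinAt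
      |>.congr (fun z hz ↦ indicator_of_mem hz _) (indicator_of_mem hx _)
  have volume_eq := setIntegral_det_one_add (μ := Measure.addHaar) ball_compact h_lipschitz
    (fun x hx ↦ indicator_of_notMem hx _) h_deriv
    ((hr.continuous_fderiv one_ne_zero).sub continuous_const).continuousOn
  have det_eq_zero (x : E) : (1 + (fderiv ℝ r x - 1)).det = 0 := by
    rw [add_sub_cancel]
    exact det_eq_zero_of_norm_eq_const hR.ne' (hr.differentiable one_ne_zero x).hasFDerivAt
      (.of_forall hnorm)
  simp only [det_eq_zero, integral_zero] at volume_eq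
  have volume_pos : 0 < Measure.addHaar.real ball :=
    ENNReal.toReal_pos (measure_closedBall_pos _ _ hR).ne' ball_compact.measure_ne_top
  exact volume_pos.ne volume_eq

theorem exists_fixedPoint_of_contDiff {E : Type*} [NormedAddCommGroup E] [InnerProductSpace ℝ E]
    [FiniteDimensional ℝ E] {f : E → E} (hf : ContDiff ℝ 1 f) (hsupp : HasCompactSupport f) :
    ∃ x, f x = x := by
  by_contra! hfix
  have ne_zero (x : E) : x - f x ≠ 0 := sub_ne_zero.2 (hfix x).symm
  obtain ⟨R, hR, hfR⟩ := hsupp.exists_pos_le_norm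
  let r : E → E := fun x ↦ (R / ‖x - f x‖) • (x - f x)
  have r_contDiff : ContDiff ℝ 1 r := by
    have sub_contDiff : ContDiff ℝ 1 fun x ↦ x - f x := contDiff_id.sub hf
    exact (contDiff_const.div (sub_contDiff.norm ℝ ne_zero)
      fun x ↦ norm_ne_zero_iff.2 (ne_zero x)).smul sub_contDiff
  have r_norm (x : E) : ‖r x‖ = R := by
    rw [norm_smul, norm_div, norm_norm, Real.norm_of_nonneg hR.le,
      div_mul_cancel₀ _ (norm_ne_zero_iff.2 (ne_zero x))]
  obtain ⟨x, hx, hrx⟩ := exists_mem_sphere_ne_of_norm_eq_const hR r_contDiff r_norm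
  have norm_x : ‖x‖ = R := mem_sphere_zero_iff_norm.1 hx
  refine hrx ?_
  simp only [r]
  rw [hfR x norm_x.ge, sub_zero, norm_x, div_self hR.ne', one_smul]

theorem exists_fixedPoint_of_hasCompactSupport {E : Type*} [NormedAddCommGroup E]
    [NormedSpace ℝ E] [FiniteDimensional ℝ E] {f : E → E} (hf : Continuous f)
    (hsupp : HasCompactSupport f) : ∃ x, f x = x := by
  let e : E ≃L[ℝ] EuclideanSpace ℝ (Fin (finrank ℝ E)) := toEuclidean
  by_contra! hfix
  let g := e ∘ f ∘ e.symm
  have g_continuous : Continuous g := by fun_prop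
  have g_ne (x) : 0 < dist x (g x) :=
    dist_pos.2 fun hx ↦ hfix (e.symm x) (e.injective (by simpa [g] using hx.symm))
  have g_supp : HasCompactSupport g :=
    (hsupp.comp_homeomorph e.symm.toHomeomorph).comp_left (map_zero e)
  obtain ⟨φ, φ_contDiff, φ_approx, φ_supp⟩ := g_continuous.exists_contDiff_approx 1
    (continuous_id.dist g_continuous) g_ne
  obtain ⟨x, hx⟩ := exists_fixedPoint_of_contDiff φ_contDiff (g_supp.mono φ_supp)
  have := φ_approx x
  rw [hx] at this
  exact this.false

theorem exists_fixedPoint_of_mapsTo.{u} {E : Type u} [NormedAddCommGroup E] [NormedSpace ℝ E]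
    [FiniteDimensional ℝ E] {s : Set E} [TietzeExtension.{u, u} s] (hs : IsCompact s)
    (hconvex : Convex ℝ s) (hne : s.Nonempty) {f : E → E} (hf : ContinuousOn f s)
    (hmaps : MapsTo f s s) : ∃ x ∈ s, f x = x := by
  obtain ⟨c, hc⟩ := hne
  obtain ⟨f', hf's, hf'⟩ := ContinuousMap.exists_forall_mem_restrict_eq hs.isClosed
    (⟨s.domRestrict f, hf.domRestrict⟩ : C(s, E)) fun x ↦ hmaps x.2
  have f'_eq (x) (hx : x ∈ s) : f' x = f x := DFunLike.congr_fun hf' ⟨x, hx⟩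
  obtain ⟨χ, hχ_one, -, hχ_supp, hχ⟩ := exists_continuous_one_zero_of_isCompact
    (hs.image (continuous_sub_right c)) isClosed_empty (disjoint_empty _)
  obtain ⟨u, hu⟩ := exists_fixedPoint_of_hasCompactSupport
    (f := fun u ↦ χ u • (f' (c + u) - c)) (by fun_prop) hχ_supp.smul_right
  have mem : c + u ∈ s := by
    rw [← hu]
    exact hconvex.add_smul_sub_mem hc (hf's _) (hχ u)
  have χ_eq_one : χ u = 1 := hχ_one ⟨c + u, mem, add_sub_cancel_left c u⟩
  simp only [χ_eq_one, one_smul] at hu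
  exact ⟨c + u, mem, by rw [← f'_eq _ mem, ← sub_eq_iff_eq_add', hu]⟩

theorem closedBall_subset_image_of_norm_sub_le.{u} {E : Type u} [NormedAddCommGroup E]
    [NormedSpace ℝ E] [FiniteDimensional ℝ E] {g : E → E} {c : E} {ρ a : ℝ} (hρ : 0 < ρ)
    (hg : ContinuousOn g (closedBall c ρ)) (hga : ∀ x ∈ closedBall c ρ, ‖g x - x‖ ≤ a) :
    closedBall c (ρ - a) ⊆ g '' closedBall c ρ := by
  intro z hz
  have : TietzeExtension.{u, u} (closedBall c ρ) := Metric.instTietzeExtensionClosedBall ℝ c hρ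
  obtain ⟨x, hx, hxz⟩ := exists_fixedPoint_of_mapsTo (s := closedBall c ρ)
    (f := fun x ↦ z - (g x - x)) (isCompact_closedBall c ρ) (convex_closedBall c ρ)
    (nonempty_closedBall.2 hρ.le) (by fun_prop) fun x hx ↦ by
      rw [mem_closedBall_iff_norm] at hz ⊢
      calc ‖z - (g x - x) - c‖ = ‖(z - c) - (g x - x)‖ := by rw [sub_right_comm]
        _ ≤ ‖z - c‖ + ‖g x - x‖ := norm_sub_le _ _
        _ ≤ ρ := by linarith [hga x hx]
  exact ⟨x, hx, by rw [sub_eq_iff_eq_add, add_sub_cancel] at hxz; exact hxz.symm⟩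

end FixedPoint

end Brouwer

section ConvexCones

theorem IsConvexCone.smul_mem {E : Type*} [AddCommMonoid E] [Module ℝ E] {C : Set E}
    (hC : IsConvexCone C) {r : ℝ} (hr : 0 ≤ r) {x : E} (hx : x ∈ C) : r • x ∈ C :=
  hC.2.2 r hr x hx

theorem IsConvexCone.add_mem {E : Type*} [AddCommMonoid E] [Module ℝ E] {C : Set E}
    (hC : IsConvexCone C) {x y : E} (hx : x ∈ C) (hy : y ∈ C) : x + y ∈ C := by
  have midpoint_mem : (1 / 2 : ℝ) • x + (1 / 2 : ℝ) • y ∈ C :=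
    hC.2.1 hx hy (by positivity) (by positivity) (by norm_num)
  have : x + y = (2 : ℝ) • ((1 / 2 : ℝ) • x + (1 / 2 : ℝ) • y) := by
    rw [smul_add, smul_smul, smul_smul, mul_one_div_cancel two_ne_zero, one_smul, one_smul]
  exact this ▸ hC.smul_mem zero_le_two midpoint_mem

theorem IsConvexCone.prod {E F : Type*} [AddCommMonoid E] [Module ℝ E] [AddCommMonoid F]
    [Module ℝ F] {C : Set E} {D : Set F} (hC : IsConvexCone C) (hD : IsConvexCone D) :
    IsConvexCone (C ×ˢ D) :=
  ⟨⟨hC.1, hD.1⟩, hC.2.1.prod hD.2.1, fun _ hr _ hx ↦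
    ⟨hC.smul_mem hr hx.1, hD.smul_mem hr hx.2⟩⟩

theorem IsConvexCone.image {E F : Type*} [AddCommMonoid E] [Module ℝ E] [AddCommMonoid F]
    [Module ℝ F] {C : Set E} (hC : IsConvexCone C) (L : E →ₗ[ℝ] F) : IsConvexCone (L '' C) := by
  refine ⟨⟨0, hC.1, map_zero L⟩, hC.2.1.linear_image L, ?_⟩
  rintro r hr _ ⟨x, hx, rfl⟩
  exact ⟨r • x, hC.smul_mem hr hx, map_smul L r x⟩

theorem isConvexCone_Ici_zero : IsConvexCone (Ici (0 : ℝ)) :=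
  ⟨self_mem_Ici, convex_Ici 0, fun _ hr _ hx ↦ mul_nonneg hr hx⟩

theorem IsConvexCone.exists_dual_nonpos_of_ne_univ {V : Type*} [NormedAddCommGroup V]
    [NormedSpace ℝ V] [FiniteDimensional ℝ V] {D : Set V} (hD : IsConvexCone D) (hne : D ≠ univ) :
    ∃ f : Module.Dual ℝ V, f ≠ 0 ∧ ∀ d ∈ D, f d ≤ 0 := by
  obtain ⟨hzero, hconvex, -⟩ := id hD
  by_cases hint : (interior D).Nonempty
  · obtain ⟨x, hx⟩ := (ne_univ_iff_exists_notMem D).1 hne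
    obtain ⟨f, hf, hfx⟩ := geometric_hahn_banach_of_nonempty_interior_point hconvex
      (fun h ↦ hx (interior_subset h)) hint
    refine ⟨f, fun h ↦ hf (ContinuousLinearMap.coe_injective h), fun d hd ↦ ?_⟩
    by_contra! hpos
    change 0 < f d at hpos
    have hfx_nonneg : 0 ≤ f x := map_zero f ▸ hfx 0 hzero
    have unbounded := hfx _ (hD.smul_mem (r := (f x + 1) / f d) (by positivity) hd)
    rw [map_smul, smul_eq_mul, div_mul_cancel₀ _ hpos.ne'] at unbounded
    linarith
  · rw [hconvex.interior_nonempty_iff_affineSpan_eq_top,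
      AffineSubspace.affineSpan_eq_top_iff_vectorSpan_eq_top_of_nonempty ℝ V V ⟨0, hzero⟩] at hint
    obtain ⟨f, hf, hker⟩ := Submodule.exists_le_ker_of_lt_top _ (lt_top_iff_ne_top.2 hint)
    refine ⟨f, hf, fun d hd ↦ ?_⟩
    have d_mem : d ∈ vectorSpan ℝ D := by simpa using vsub_mem_vectorSpan ℝ hd hzero
    exact (LinearMap.mem_ker.1 (hker d_mem)).le

variable {X V : Type*} [NormedAddCommGroup X] [NormedSpace ℝ X] [NormedAddCommGroup V]
  [NormedSpace ℝ V] [FiniteDimensional ℝ V] {C T : Set X} {L : X →L[ℝ] V}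

theorem IsConvexCone.exists_continuous_rightInverse (hC : IsConvexCone C) (hL : L '' C = univ) :
    ∃ σ : V → X, Continuous σ ∧ (∀ z, σ z ∈ C) ∧ (∀ z, L (σ z) = z) ∧ σ =O[𝓝 0] id := by
  have onto (z : V) : ∃ x ∈ C, L x = z := (mem_image _ _ _).1 (hL ▸ mem_univ z)
  choose lift lift_mem L_lift using onto
  let b := Module.finBasis ℝ V
  have coord_continuous (i) : Continuous (b.coord i) := (b.coord i).continuous_of_finiteDimensional
  refine ⟨fun z ↦ ∑ i, ((b.coord i z)⁺ • lift (b i) + (b.coord i z)⁻ • lift (-b i)),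
    by fun_prop, fun z ↦ ?_, fun z ↦ ?_, ?_⟩
  · exact Finset.sum_induction _ (· ∈ C) (fun _ _ ↦ hC.add_mem) hC.1 fun i _ ↦
      hC.add_mem (hC.smul_mem (posPart_nonneg _) (lift_mem _))
        (hC.smul_mem (negPart_nonneg _) (lift_mem _))
  · simp_rw [map_sum, map_add, map_smul, L_lift, smul_neg, ← sub_eq_add_neg, ← sub_smul,
      posPart_sub_negPart]
    exact b.sum_repr z
  · have term_bound (a : ℝ) (x y : X) : ‖a⁺ • x + a⁻ • y‖ ≤ (‖x‖ + ‖y‖) * ‖a‖ :=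
      calc ‖a⁺ • x + a⁻ • y‖ ≤ a⁺ * ‖x‖ + a⁻ * ‖y‖ := by
            refine (norm_add_le _ _).trans_eq ?_
            rw [norm_smul_of_nonneg (posPart_nonneg a), norm_smul_of_nonneg (negPart_nonneg a)]
        _ ≤ a⁺ * (‖x‖ + ‖y‖) + a⁻ * (‖x‖ + ‖y‖) := by
            gcongr
            · exact le_add_of_nonneg_right (norm_nonneg y)
            · exact le_add_of_nonneg_left (norm_nonneg x)
        _ = (‖x‖ + ‖y‖) * ‖a‖ := by
            rw [← add_mul, posPart_add_negPart, mul_comm, Real.norm_eq_abs]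
    exact IsBigO.fun_sum fun i _ ↦ (IsBigO.of_bound _ (.of_forall fun z ↦ term_bound _ _ _)).trans
      ((LinearMap.toContinuousLinearMap (b.coord i)).isBigO_id _)

theorem IsConvexCone.nhds_le_map (hC : IsConvexCone C) (hL : L '' C = univ) (hT : T ∈ 𝓝[C] 0)
    {G : X → V} (hG : ContinuousOn G T) (hGL : HasFDerivWithinAt G L T 0) :
    𝓝 (G 0) ≤ map G (𝓝[T] 0) := by
  obtain ⟨σ, σ_cont, σ_mem, Lσ, σ_isBigO⟩ := hC.exists_continuous_rightInverse hL
  have σ_zero : σ 0 = 0 := norm_le_zero_iff.1 <| by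
    obtain ⟨K, hK⟩ := σ_isBigO.bound
    simpa using hK.self_of_nhds
  have σ_tendsto : Tendsto σ (𝓝 0) (𝓝[T] 0) := by
    refine (tendsto_nhdsWithin_iff.2 ⟨σ_zero ▸ σ_cont.tendsto 0, .of_forall σ_mem⟩).mono_right ?_
    exact nhdsWithin_le_of_mem hT
  let g : V → V := fun z ↦ G (σ z) - G 0
  have g_isLittleO : (fun z ↦ g z - z) =o[𝓝 0] id := by
    refine .trans_isBigO ((hGL.isLittleO.comp_tendsto σ_tendsto).congr (fun z ↦ ?_) fun z ↦ ?_)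
      σ_isBigO
    · simp [g, Lσ]
    · simp
  refine Filter.le_map fun s hs ↦ ?_
  obtain ⟨ρ, hρ, hball⟩ := nhds_basis_closedBall.eventually_iff.1
    ((σ_tendsto.eventually (inter_mem hs self_mem_nhdsWithin)).and
      (g_isLittleO.bound one_half_pos))
  have g_continuous : ContinuousOn g (closedBall 0 ρ) :=
    (hG.comp σ_cont.continuousOn fun z hz ↦ (hball hz).1.2).sub continuousOn_const
  have ball_subset : closedBall 0 (ρ - 1 / 2 * ρ) ⊆ g '' closedBall 0 ρ :=
    closedBall_subset_image_of_norm_sub_le hρ g_continuous fun z hz ↦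
      (hball hz).2.trans (by gcongr; exact mem_closedBall_zero_iff.1 hz)
  refine mem_of_superset (closedBall_mem_nhds (G 0) (by linarith : 0 < ρ - 1 / 2 * ρ)) fun w hw ↦ ?_
  obtain ⟨z, hz, hzw⟩ := ball_subset (mem_closedBall_zero_iff.2 (mem_closedBall_iff_norm.1 hw))
  exact ⟨σ z, (hball hz).1.1, sub_left_injective hzw⟩

end ConvexCones

section MaximumPrinciple

theorem not_nhds_le_map_of_isLocalMinOn {V X : Type*} [NormedAddCommGroup V] {A B : Set V} {y : V}
    {Ψ : V → ℝ} {l : Filter X} {a b : X → V} {s : X → ℝ}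
    (hmin : IsLocalMinOn Ψ (A ∩ B) y) (ha : Tendsto a l (𝓝 y)) (haA : ∀ᶠ x in l, a x ∈ A)
    (hbB : ∀ᶠ x in l, b x ∈ B) (hs : ∀ᶠ x in l, 0 ≤ s x) :
    ¬ 𝓝 (0, Ψ y) ≤ map (fun x ↦ (a x - b x, Ψ (a x) + s x)) l := by
  intro hle
  have better : ∃ᶠ q : V × ℝ in 𝓝 (0, Ψ y), q.1 = 0 ∧ q.2 < Ψ y :=
    (Continuous.prodMk_right (0 : V)).tendsto (Ψ y) |>.frequently
      ((frequently_lt_nhds (Ψ y)).mono fun c hc ↦ ⟨rfl, hc⟩)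
  refine frequently_map.1 (better.filter_mono hle) ?_
  filter_upwards [ha.eventually (eventually_nhdsWithin_iff.1 hmin), haA, hbB, hs]
    with x hx hxA hxB hxs ⟨hab, hlt⟩
  have min_le : Ψ y ≤ Ψ (a x) := hx ⟨hxA, sub_eq_zero.1 hab ▸ hxB⟩
  linarith

variable {V : Type*} [NormedAddCommGroup V] [NormedSpace ℝ V] {A B R S : Set V} {y : V}
  {Ψ : V → ℝ} {Ψ' : V →L[ℝ] ℝ}

theorem IsBoltyanskiCone.isConvexCone (hR : IsBoltyanskiCone A y R) : IsConvexCone R := by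
  obtain ⟨m, C, L, δ, F, hC, rfl, -⟩ := hR
  exact hC.image L

theorem IsBoltyanskiCone.exists_chart (hR : IsBoltyanskiCone A y R) :
    ∃ (m : ℕ) (C T : Set (EuclideanSpace ℝ (Fin m))) (L : EuclideanSpace ℝ (Fin m) →L[ℝ] V)
      (F : EuclideanSpace ℝ (Fin m) → V), IsConvexCone C ∧ L '' C = R ∧ T ∈ 𝓝[C] 0 ∧
      ContinuousOn F T ∧ MapsTo F T A ∧ F 0 = y ∧ HasFDerivWithinAt F L T 0 := by
  obtain ⟨m, C, L, δ, F, hC, rfl, hδ, hF, hFA, hF0, hFL⟩ := hR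
  refine ⟨m, C, C ∩ closedBall 0 δ, LinearMap.toContinuousLinearMap L, F, hC, rfl,
    inter_mem self_mem_nhdsWithin (mem_nhdsWithin_of_mem_nhds (closedBall_mem_nhds 0 hδ)), hF,
    hFA, hF0, .of_isLittleO ?_⟩
  simpa [hF0] using hFL

/-- The linear map `(v, w, r) ↦ (v - w, Ψ' v + r)`, the derivative at `(y, y, 0)` of
`(a, b, s) ↦ (a - b, Ψ a + s)` when `Ψ'` is the derivative of `Ψ` at `y`. For `a` reachable, `b` in
the target and `s ≥ 0`, the latter takes the value `(0, c)` exactly when some reachable point of the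
target has cost at most `c`; a multiplier is a linear form which is nonpositive on the image under
`variationMap Ψ'` of the approximating cones. -/
def variationMap (Ψ' : V →L[ℝ] ℝ) : V × V × ℝ →L[ℝ] V × ℝ :=
  let a : V × V × ℝ →L[ℝ] V := .fst ℝ V (V × ℝ)
  let b : V × V × ℝ →L[ℝ] V := (ContinuousLinearMap.fst ℝ V ℝ).comp (.snd ℝ V (V × ℝ))
  let s : V × V × ℝ →L[ℝ] ℝ := (ContinuousLinearMap.snd ℝ V ℝ).comp (.snd ℝ V (V × ℝ))
  (a - b).prod (Ψ'.comp a + s)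

theorem hasFDerivWithinAt_variation {X Y : Type*} [NormedAddCommGroup X] [NormedSpace ℝ X]
    [NormedAddCommGroup Y] [NormedSpace ℝ Y] {T : Set X} {U : Set Y} {I : Set ℝ} {F : X → V}
    {G : Y → V} {L : X →L[ℝ] V} {M : Y →L[ℝ] V} {p : X × Y × ℝ}
    (hΨ : HasFDerivWithinAt Ψ Ψ' A (F p.1)) (hFA : MapsTo F T A)
    (hF : HasFDerivWithinAt F L T p.1) (hG : HasFDerivWithinAt G M U p.2.1) :
    HasFDerivWithinAt (fun c : X × Y × ℝ ↦ (F c.1 - G c.2.1, Ψ (F c.1) + c.2.2))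
      ((variationMap Ψ').comp (L.prodMap (M.prodMap (.id ℝ ℝ)))) (T ×ˢ U ×ˢ I) p := by
  have hF' := hF.comp p hasFDerivWithinAt_fst fun c (hc : c ∈ T ×ˢ U ×ˢ I) ↦ hc.1
  have hG' := hG.comp p (hasFDerivWithinAt_fst.comp p hasFDerivWithinAt_snd (mapsTo_univ _ _))
    fun c (hc : c ∈ T ×ˢ U ×ˢ I) ↦ hc.2.1
  have hs := hasFDerivWithinAt_snd.comp (𝕜 := ℝ) (s := T ×ˢ U ×ˢ I) p hasFDerivWithinAt_snd
    (mapsTo_univ _ _)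
  exact (hF'.sub hG').prodMk ((hΨ.comp p hF' fun c hc ↦ hFA hc.1).add hs)

theorem image_variationMap_ne_univ_of_isLocalMinOn [FiniteDimensional ℝ V]
    (hmin : IsLocalMinOn Ψ (A ∩ B) y) (hΨ : ContinuousOn Ψ A) (hΨ' : HasFDerivWithinAt Ψ Ψ' A y)
    (hR : IsBoltyanskiCone A y R) (hS : IsBoltyanskiCone B y S) :
    variationMap Ψ' '' (R ×ˢ S ×ˢ Ici 0) ≠ univ := by
  obtain ⟨m, C, T, L, F, hC, rfl, hT, hF, hFA, rfl, hFL⟩ := hR.exists_chart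
  obtain ⟨n, D, U, M, G, hD, rfl, hU, hG, hGB, hG0, hGM⟩ := hS.exists_chart
  intro hsurj
  let Θ := T ×ˢ U ×ˢ Ici (0 : ℝ)
  have Θ_mem : Θ ∈ 𝓝[C ×ˢ D ×ˢ Ici 0] 0 :=
    nhdsWithin_prod hT (nhdsWithin_prod hU self_mem_nhdsWithin)
  have derivative_onto : (variationMap Ψ').comp (L.prodMap (M.prodMap (.id ℝ ℝ))) ''
      (C ×ˢ D ×ˢ Ici 0) = univ := by
    rw [← hsurj, ContinuousLinearMap.coe_comp, image_comp, ContinuousLinearMap.coe_prodMap',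
      prodMap_image_prod, ContinuousLinearMap.coe_prodMap', prodMap_image_prod,
      ContinuousLinearMap.coe_id', image_id]
  have F_continuousOn : ContinuousOn (fun c : _ × EuclideanSpace ℝ (Fin n) × ℝ ↦ F c.1) Θ :=
    hF.comp continuousOn_fst fun c hc ↦ hc.1
  have G_continuousOn : ContinuousOn
      (fun c : EuclideanSpace ℝ (Fin m) × EuclideanSpace ℝ (Fin n) × ℝ ↦ G c.2.1) Θ :=
    hG.comp (by fun_prop) fun c hc ↦ hc.2.1
  have nhds_le := (hC.prod (hD.prod isConvexCone_Ici_zero)).nhds_le_map derivative_onto Θ_mem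
    ((F_continuousOn.sub G_continuousOn).prodMk
      ((hΨ.comp F_continuousOn fun c hc ↦ hFA hc.1).add (by fun_prop)))
    (hasFDerivWithinAt_variation hΨ' hFA hFL hGM)
  have value_zero : (F 0 - G 0, Ψ (F 0) + (0 : ℝ)) = (0, Ψ (F 0)) := by
    rw [hG0, sub_self, add_zero]
  have mem_Θ : ∀ᶠ c in 𝓝[Θ] 0, c ∈ Θ := self_mem_nhdsWithin
  have zero_mem : (0 : EuclideanSpace ℝ (Fin m) × EuclideanSpace ℝ (Fin n) × ℝ) ∈ Θ :=
    mem_of_mem_nhdsWithin (mk_mem_prod hC.1 (mk_mem_prod hD.1 self_mem_Ici)) Θ_mem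
  exact not_nhds_le_map_of_isLocalMinOn hmin (F_continuousOn 0 zero_mem)
    (mem_Θ.mono fun c hc ↦ hFA hc.1) (mem_Θ.mono fun c hc ↦ hGB hc.2.1)
    (mem_Θ.mono fun c hc ↦ hc.2.2) (value_zero ▸ nhds_le)

theorem exists_multiplier_of_image_variationMap_ne_univ [FiniteDimensional ℝ V]
    (hR : IsConvexCone R) (hS : IsConvexCone S)
    (hne : variationMap Ψ' '' (R ×ˢ S ×ˢ Ici 0) ≠ univ) :
    ∃ (lam : Module.Dual ℝ V) (lamc : ℝ), lamc ≤ 0 ∧ ¬(lam = 0 ∧ lamc = 0) ∧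
      (∀ v ∈ R, lam v + lamc * Ψ' v ≤ 0) ∧ (∃ v ∈ R, lam v + lamc * Ψ' v = 0) ∧
      ∀ w ∈ S, 0 ≤ lam w := by
  obtain ⟨f, hf, hf_nonpos⟩ := ((hR.prod (hS.prod isConvexCone_Ici_zero)).image
    (variationMap Ψ' : V × V × ℝ →ₗ[ℝ] V × ℝ)).exists_dual_nonpos_of_ne_univ hne
  let lam : Module.Dual ℝ V := f ∘ₗ LinearMap.inl ℝ V ℝ
  let lamc : ℝ := f (0, 1)
  have f_apply (v : V) (c : ℝ) : f (v, c) = lam v + lamc * c := by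
    have : (v, c) = (v, 0) + c • ((0, 1) : V × ℝ) := by simp
    rw [this, map_add, map_smul, smul_eq_mul, mul_comm]
    rfl
  have nonpos {v w : V} {r : ℝ} (hv : v ∈ R) (hw : w ∈ S) (hr : 0 ≤ r) :
      lam (v - w) + lamc * (Ψ' v + r) ≤ 0 := by
    rw [← f_apply]
    exact hf_nonpos _ ⟨(v, w, r), ⟨hv, hw, hr⟩, rfl⟩
  refine ⟨lam, lamc, ?_, ?_, fun v hv ↦ ?_, ⟨0, hR.1, ?_⟩, fun w hw ↦ ?_⟩
  · simpa using nonpos hR.1 hS.1 zero_le_one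
  · rintro ⟨hlam, hlamc⟩
    exact hf (LinearMap.ext fun ⟨v, c⟩ ↦ by simp [f_apply, hlam, hlamc])
  · simpa using nonpos hv hS.1 le_rfl
  · simp
  · simpa using nonpos hR.1 hw le_rfl

theorem abstract_maximum_principle_general [FiniteDimensional ℝ V]
    (hmin : IsLocalMinOn Ψ (A ∩ B) y) (hΨ : ContinuousOn Ψ A) (hΨ' : HasFDerivWithinAt Ψ Ψ' A y)
    (hR : IsBoltyanskiCone A y R) (hS : IsBoltyanskiCone B y S) :
    ∃ (lam : Module.Dual ℝ V) (lamc : ℝ), lamc ≤ 0 ∧ ¬(lam = 0 ∧ lamc = 0) ∧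
      (∀ v ∈ R, lam v + lamc * Ψ' v ≤ 0) ∧ (∃ v ∈ R, lam v + lamc * Ψ' v = 0) ∧
      ∀ w ∈ S, 0 ≤ lam w :=
  exists_multiplier_of_image_variationMap_ne_univ hR.isConvexCone hS.isConvexCone
    (image_variationMap_ne_univ_of_isLocalMinOn hmin hΨ hΨ' hR hS)

end MaximumPrinciple

/-- Abstract Maximum Principle: given a `𝒰̂`-minimizer `(u⋆, y u⋆)` of `Ψ ∘ y` over the
feasible controls, a subfamily `U⋆ ∋ u⋆` of `𝒰̂`, and Boltyanski approximating cones `S`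
(to the target `𝒮`) and `R` (to the reachable set `y '' U⋆`) at `y u⋆`, there is a nonzero
linear form `(lam, lamc)` with `lamc ≤ 0`, `max {(lam + lamc ∇Ψ(y u⋆))·v : v ∈ R} = 0`
and `lam ∈ -S⊥`. -/
theorem abstract_maximum_principle {n : ℕ}
    (Ω : Set (EuclideanSpace ℝ (Fin n))) (hΩ : IsOpen Ω)
    {𝒰 : Type*} (y : 𝒰 → EuclideanSpace ℝ (Fin n)) (hrange : ∀ u, y u ∈ Ω)
    (𝒮 : Set (EuclideanSpace ℝ (Fin n))) (h𝒮 : 𝒮 ⊆ Ω)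
    (Ψ : EuclideanSpace ℝ (Fin n) → ℝ) (hΨ : ∀ x ∈ Ω, DifferentiableAt ℝ Ψ x)
    (Uhat Ustar : Set 𝒰) (hUU : Ustar ⊆ Uhat) (ustar : 𝒰) (hustar : ustar ∈ Ustar)
    (hfeas : y ustar ∈ 𝒮)
    (hmin : ∀ u ∈ Uhat, y u ∈ 𝒮 → Ψ (y ustar) ≤ Ψ (y u))
    (S R : Set (EuclideanSpace ℝ (Fin n)))
    (hS : IsBoltyanskiCone 𝒮 (y ustar) S)
    (hR : IsBoltyanskiCone (y '' Ustar) (y ustar) R) :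
    ∃ (lam : Module.Dual ℝ (EuclideanSpace ℝ (Fin n))) (lamc : ℝ),
      lamc ≤ 0 ∧
      -- Nontriviality
      ¬(lam = 0 ∧ lamc = 0) ∧
      -- Maximization: sup over R of (lam + lamc ∇Ψ(y⋆))·v equals 0 and is attained
      (∀ v ∈ R, lam v + lamc * (fderiv ℝ Ψ (y ustar)) v ≤ 0) ∧
      (∃ v ∈ R, lam v + lamc * (fderiv ℝ Ψ (y ustar)) v = 0) ∧
      -- Non-transversality: lam ∈ -S⊥
      (∀ w ∈ S, 0 ≤ lam w) := by
  have hmin_on : IsMinOn Ψ (y '' Ustar ∩ 𝒮) (y ustar) := by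
    rintro _ ⟨⟨u, hu, rfl⟩, hu𝒮⟩
    exact hmin u (hUU hu) hu𝒮
  have hΨ_continuous : ContinuousOn Ψ (y '' Ustar) := by
    rintro _ ⟨u, -, rfl⟩
    exact (hΨ _ (hrange u)).continuousAt.continuousWithinAt
  exact abstract_maximum_principle_general hmin_on.localize hΨ_continuous
    (hΨ _ (hrange ustar)).hasFDerivAt.hasFDerivWithinAt hR hS
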